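/- Let N be even and φ'' a binary form of degree N with a_{N/2−1} = a_{N/2+1} = 0 (complement of the sl(2,ℂ)-orbit directions at φ = x₀^{N/2}x₁^{N/2}), sufficiently close to φ. Then φ'' is polystable for the SL(2,ℂ)-action if and only if its ℂ*-orbit under the diagonal torus diag(λ,λ^{-1}) is closed. -/

import Mathlib

/-! Write `N = 2 M`. A form `f` close to `φ = x ^ M * y ^ M` is encoded by its coefficients `a i`, the
coefficient of `x ^ i * y ^ (N - i)`, with `a M ≠ 0`. The torus acts on `a i` with weight
`2 (i - M)`, so the torus orbit is closed exactly when `f` is a multiple of `φ` or nonzero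
coefficients occur on both sides of the middle (`eq_zero_of_TO_closed`, `TO_closed_of_mid`,
`TO_closed_of_both`).

If the torus orbit is not closed, a one-parameter subgroup contracts `f` to `a M * φ`. If moreover
the `SL(2,ℂ)`-orbit is closed, then `f` is in the orbit of `a M * φ`, and the slice condition
forces `f` to be a multiple of `φ` (`mid_of_product`), a contradiction.

Conversely, suppose that the torus orbit is closed. The orbit of a nonzero multiple of `φ` is closed
(`SO_closed_of_mid`). For the other forms, the Hilbert-Mumford criterion (`SO_closed_of_stable`),
proved here from the decomposition `g = k * diag(t, t⁻¹) * n` with `k` and `n` bounded, reduces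
the claim to the absence of roots of multiplicity at least `M`. By the slice condition and the
closeness to `φ`, such a root could only be `[0 : 1]` or `[1 : 0]` (`low_coeff_zero`), so that all
nonzero coefficients would be on one side of the middle.
-/

open MvPolynomial

noncomputable section

/-- A binary form viewed as a polynomial function `ℂ² → ℂ` (the space of such
functions carries the topology of pointwise convergence). -/
def evalFn (f : MvPolynomial (Fin 2) ℂ) : (Fin 2 → ℂ) → ℂ := fun v => eval v f

/-- The `SL(2,ℂ)`-orbit of a binary form. -/
def SLorbit (f : MvPolynomial (Fin 2) ℂ) : Set ((Fin 2 → ℂ) → ℂ) :=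
  {F | ∃ g : Matrix.SpecialLinearGroup (Fin 2) ℂ,
    F = fun v => eval ((g : Matrix (Fin 2) (Fin 2) ℂ).mulVec v) f}

/-- The orbit of a binary form under the diagonal torus `diag(λ, λ⁻¹) ⊂ SL(2,ℂ)`. -/
def Torbit (f : MvPolynomial (Fin 2) ℂ) : Set ((Fin 2 → ℂ) → ℂ) :=
  {F | ∃ lam : ℂ, lam ≠ 0 ∧
    F = fun v => eval (fun i : Fin 2 => if i = 0 then lam * v 0 else lam⁻¹ * v 1) f}

open Filter Topology

/-! ### Binary forms through their coefficients -/

/-- The value at `(x, y)` of the binary form of degree `N` whose coefficient at `x ^ i * y ^ (N - i)`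
is `a i`; only the values `a i` with `i ≤ N` matter. -/
def form (N : ℕ) (a : ℕ → ℂ) (x y : ℂ) : ℂ :=
  ∑ i ∈ Finset.range (N + 1), a i * x ^ i * y ^ (N - i)

lemma eval_eq_form {N : ℕ} {f : MvPolynomial (Fin 2) ℂ} (hf : f.IsHomogeneous N)
    (v : Fin 2 → ℂ) :
    eval v f =
      form N (fun i => coeff (Finsupp.single 0 i + Finsupp.single 1 (N - i)) f) (v 0) (v 1) := by
  rw [eval_eq', form]
  have key : ∀ d ∈ f.support, d 0 + d 1 = N := by
    intro d hd
    have h := hf (mem_support_iff.1 hd)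
    simpa [Finsupp.weight_apply, Finsupp.sum_fintype] using h
  have key2 : ∀ d ∈ f.support, Finsupp.single 0 (d 0) + Finsupp.single 1 (N - d 0) = d := by
    intro d hd
    have := key d hd
    ext i
    fin_cases i <;> simp; omega
  refine Finset.sum_of_injOn (fun d => d 0) ?_ ?_ ?_ ?_
  · intro d hd e he h
    rw [← key2 d hd, ← key2 e he]
    rw [show d 0 = e 0 from h]
  · intro d hd
    have := key d hd
    exact Finset.mem_coe.2 (Finset.mem_range.2 (show d 0 < N + 1 by omega))
  · intro i hi hi'
    have : coeff (Finsupp.single 0 i + Finsupp.single 1 (N - i)) f = 0 := by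
      by_contra hne
      exact hi' ⟨_, mem_support_iff.2 hne, by simp⟩
    rw [this]; ring
  · intro d hd
    rw [key2 d hd, Fin.prod_univ_two, mul_assoc]
    congr 3
    have := key d hd
    omega

lemma form_subst (N : ℕ) (a : ℕ → ℂ) (p q r s : ℂ) :
    ∃ b : ℕ → ℂ, ∀ x y, form N a (p * x + q * y) (r * x + s * y) = form N b x y := by
  let f : MvPolynomial (Fin 2) ℂ := ∑ i ∈ Finset.range (N + 1),
    C (a i) * (C p * X 0 + C q * X 1) ^ i * (C r * X 0 + C s * X 1) ^ (N - i)
  have hf : f.IsHomogeneous N := by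
    refine IsHomogeneous.sum _ _ _ fun i hi => ?_
    have h1 : ∀ p q : ℂ, (C p * X 0 + C q * X 1 : MvPolynomial (Fin 2) ℂ).IsHomogeneous 1 :=
      fun p q => (isHomogeneous_C_mul_X _ _).add (isHomogeneous_C_mul_X _ _)
    have h2 := ((isHomogeneous_C (Fin 2) (a i)).mul ((h1 p q).pow i)).mul ((h1 r s).pow (N - i))
    have hi' : i ≤ N := by simpa [Nat.lt_succ_iff] using hi
    convert h2 using 1
    omega
  refine ⟨fun i => coeff (Finsupp.single 0 i + Finsupp.single 1 (N - i)) f, fun x y => ?_⟩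
  have := eval_eq_form hf ![x, y]
  simp only [Matrix.cons_val_zero, Matrix.cons_val_one] at this
  rw [← this]
  simp [f, form]

lemma form_swap (N : ℕ) (a : ℕ → ℂ) (x y : ℂ) :
    form N (fun i => a (N - i)) x y = form N a y x := by
  rw [form, form, ← Finset.sum_flip]
  refine Finset.sum_congr rfl fun i hi => ?_
  have hi' : i ≤ N := by simpa [Nat.lt_succ_iff] using hi
  rw [Nat.sub_sub_self hi']
  ring

/-- The matrix of Lagrange interpolation at the points `(0, 1), …, (N, 1)`. -/
def lag (N : ℕ) : Matrix (Fin (N + 1)) (Fin (N + 1)) ℂ :=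
  (Matrix.vandermonde fun i : Fin (N + 1) => ((i : ℕ) : ℂ))⁻¹

/-- The `i`-th coefficient of a binary form, read off from its values at `(0, 1), …, (N, 1)`. It is
defined for every function on `ℂ²`, and is visibly continuous for pointwise convergence. -/
def co (N : ℕ) (F : (Fin 2 → ℂ) → ℂ) (i : ℕ) : ℂ :=
  if h : i < N + 1 then ∑ j : Fin (N + 1), lag N ⟨i, h⟩ j * F ![((j : ℕ) : ℂ), 1] else 0

lemma co_eq {N : ℕ} {F : (Fin 2 → ℂ) → ℂ} {a : ℕ → ℂ}
    (h : ∀ x y, F ![x, y] = form N a x y) {i : ℕ} (hi : i ≤ N) : co N F i = a i := by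
  have hdet : IsUnit (Matrix.vandermonde fun i : Fin (N + 1) => ((i : ℕ) : ℂ)).det := by
    rw [isUnit_iff_ne_zero, Matrix.det_vandermonde_ne_zero_iff]
    intro i j hij
    exact Fin.ext (Nat.cast_injective (R := ℂ) hij)
  have hv : (Matrix.vandermonde fun i : Fin (N + 1) => ((i : ℕ) : ℂ)).mulVec (fun j : Fin (N + 1) => a j) =
      fun j : Fin (N + 1) => F ![((j : ℕ) : ℂ), 1] := by
    ext j
    rw [h, form, Finset.sum_range]
    simp [Matrix.mulVec, dotProduct, Matrix.vandermonde_apply, mul_comm]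
  have h2 : (lag N).mulVec (fun j : Fin (N + 1) => F ![((j : ℕ) : ℂ), 1]) = fun j : Fin (N + 1) => a j := by
    rw [← hv, Matrix.mulVec_mulVec, lag, Matrix.nonsing_inv_mul _ hdet, Matrix.one_mulVec]
  have h3 := congrFun h2 ⟨i, by omega⟩
  rw [co, dif_pos (by omega)]
  exact h3

lemma form_congr {N : ℕ} {a b : ℕ → ℂ} (h : ∀ i ≤ N, a i = b i) (x y : ℂ) :
    form N a x y = form N b x y := by
  refine Finset.sum_congr rfl fun i hi => ?_
  rw [h i (by simpa [Nat.lt_succ_iff] using hi)]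

lemma coeff_unique {N : ℕ} {a b : ℕ → ℂ} (h : ∀ x y, form N a x y = form N b x y) {i : ℕ}
    (hi : i ≤ N) : a i = b i := by
  have h1 := co_eq (N := N) (F := fun v => form N a (v 0) (v 1)) (a := a) (by simp) hi
  have h2 := co_eq (N := N) (F := fun v => form N a (v 0) (v 1)) (a := b) (by simp [h]) hi
  rw [← h1, ← h2]

lemma form_co {N : ℕ} {F : (Fin 2 → ℂ) → ℂ} {a : ℕ → ℂ}
    (h : ∀ x y, F ![x, y] = form N a x y) (x y : ℂ) : form N (co N F) x y = F ![x, y] := by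
  rw [h]
  exact form_congr (fun i hi => co_eq h hi) x y

lemma continuous_co (N i : ℕ) : Continuous fun F => co N F i := by
  unfold co
  split_ifs
  · fun_prop
  · fun_prop

lemma form_single {N M : ℕ} (hM : M ≤ N) {a : ℕ → ℂ} (h : ∀ i ≤ N, i ≠ M → a i = 0) (x y : ℂ) :
    form N a x y = a M * x ^ M * y ^ (N - M) := by
  rw [form, Finset.sum_eq_single M]
  · intro i hi hne
    rw [h i (by simpa [Nat.lt_succ_iff] using hi) hne]; ring
  · intro h; simp at h; omega

lemma form_scale (N : ℕ) (a : ℕ → ℂ) (s t x y : ℂ) :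
    form N a (s * x) (t * y) = form N (fun i => a i * s ^ i * t ^ (N - i)) x y := by
  refine Finset.sum_congr rfl fun i _ => ?_
  rw [mul_pow, mul_pow]; ring

/-! ### Ultrafilters and closed orbits -/

/-- A bounded complex function converges along every ultrafilter. -/
lemma ultra_bdd {α : Type*} (𝒰 : Ultrafilter α) (h : α → ℂ) (B : ℝ)
    (hB : ∀ᶠ g in (𝒰 : Filter α), ‖h g‖ ≤ B) : ∃ z, Tendsto h 𝒰 (𝓝 z) := by
  obtain ⟨z, -, hz⟩ := (isCompact_closedBall (0 : ℂ) B).ultrafilter_le_nhds (𝒰.map h)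
    (by
      rw [Filter.le_principal_iff]
      show ∀ᶠ g in (𝒰 : Filter α), h g ∈ Metric.closedBall (0 : ℂ) B
      filter_upwards [hB] with g hg
      simpa using hg)
  exact ⟨z, hz⟩

lemma bdd_of_tendsto {α : Type*} {l : Filter α} {h : α → ℂ} {z : ℂ} (hz : Tendsto h l (𝓝 z)) :
    ∀ᶠ g in l, ‖h g‖ ≤ ‖z‖ + 1 :=
  (hz.norm.eventually (gt_mem_nhds (lt_add_one _))).mono fun _ h => h.le

lemma isClosed_range_of_ultra {α Y : Type*} [TopologicalSpace Y] (Φ : α → Y)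
    (h : ∀ (𝒰 : Ultrafilter α) (F : Y), Tendsto Φ 𝒰 (𝓝 F) → ∃ x, Φ x = F) :
    IsClosed (Set.range Φ) := by
  refine isClosed_of_closure_subset fun F hF => ?_
  obtain ⟨u, hu, huF⟩ := mem_closure_iff_ultrafilter.1 hF
  obtain ⟨y, hy⟩ := u.nonempty_of_mem hu
  obtain ⟨x₀, -⟩ := hy
  have : Nonempty α := ⟨x₀⟩
  refine h (u.map (Function.invFun Φ)) F ?_
  have h1 : Tendsto (Φ ∘ Function.invFun Φ) u (𝓝 F) := by
    refine Tendsto.congr' ?_ (tendsto_id.mono_left huF : Tendsto id (u : Filter Y) (𝓝 F))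
    filter_upwards [hu] with y hy
    exact (Function.invFun_eq hy).symm
  simpa [Filter.tendsto_map'_iff] using h1

/-! ### The orbits of the diagonal torus -/

/-- The torus orbit of the binary form with coefficients `a`. -/
def TO (N : ℕ) (a : ℕ → ℂ) : Set ((Fin 2 → ℂ) → ℂ) :=
  Set.range fun l : ℂˣ => fun v => form N a (l * v 0) ((l⁻¹ : ℂˣ) * v 1)

/-- The `SL(2,ℂ)`-orbit of the binary form with coefficients `a`. -/
def SO (N : ℕ) (a : ℕ → ℂ) : Set ((Fin 2 → ℂ) → ℂ) :=
  Set.range fun g : Matrix.SpecialLinearGroup (Fin 2) ℂ =>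
    fun v => form N a (g.1 0 0 * v 0 + g.1 0 1 * v 1) (g.1 1 0 * v 0 + g.1 1 1 * v 1)

/-- If only exponents of `x` at least `M` occur, then the one-parameter subgroup `diag(l, l⁻¹)`
contracts the form to its middle monomial as `l → 0`. -/
lemma tendsto_mid {M : ℕ} {a : ℕ → ℂ} (h : ∀ i < M, a i = 0) (x y : ℂ) :
    Tendsto (fun l : ℂ => form (2 * M) a (l * x) (l⁻¹ * y)) (𝓝[≠] 0) (𝓝 (a M * x ^ M * y ^ M)) := by
  have h1 : Tendsto (fun l : ℂ => ∑ i ∈ Finset.range (2 * M + 1),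
      a i * x ^ i * y ^ (2 * M - i) * l ^ (2 * (i - M))) (𝓝 0)
      (𝓝 (∑ i ∈ Finset.range (2 * M + 1), a i * x ^ i * y ^ (2 * M - i) * 0 ^ (2 * (i - M)))) := by
    refine Continuous.tendsto ?_ _
    fun_prop
  have h2 : (∑ i ∈ Finset.range (2 * M + 1),
      a i * x ^ i * y ^ (2 * M - i) * (0 : ℂ) ^ (2 * (i - M))) = a M * x ^ M * y ^ M := by
    rw [Finset.sum_eq_single M]
    · simp [two_mul]
    · intro i _ hne
      rcases lt_or_gt_of_ne hne with hlt | hgt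
      · rw [h i hlt]; ring
      · rw [zero_pow (by omega)]; ring
    · intro hM; simp at hM; omega
  rw [h2] at h1
  refine (h1.mono_left nhdsWithin_le_nhds).congr' ?_
  filter_upwards [self_mem_nhdsWithin] with l hl
  have hl : l ≠ 0 := hl
  refine Finset.sum_congr rfl fun i hi => ?_
  have hi' : i ≤ 2 * M := by simpa [Nat.lt_succ_iff] using hi
  by_cases hlt : i < M
  · rw [h i hlt]; ring
  obtain ⟨k, rfl⟩ := Nat.exists_eq_add_of_le (not_lt.1 hlt)
  obtain ⟨m, hm⟩ := Nat.exists_eq_add_of_le hi'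
  have e1 : 2 * M - (M + k) = m := by omega
  have e2 : M = k + m := by omega
  rw [e1, mul_pow, mul_pow, inv_pow]
  have : l ^ (M + k) = l ^ (2 * (M + k - M)) * l ^ m := by
    rw [← pow_add]; congr 1; omega
  rw [this]
  have := pow_ne_zero m hl
  field_simp

lemma mid_mem_closure_TO {M : ℕ} {a : ℕ → ℂ} (h : (∀ i < M, a i = 0) ∨ ∀ i ≤ 2 * M, M < i → a i = 0) :
    (fun v : Fin 2 → ℂ => a M * v 0 ^ M * v 1 ^ M) ∈ closure (TO (2 * M) a) := by
  rcases h with h | h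
  · refine mem_closure_of_tendsto (b := 𝓝[≠] (0 : ℂ))
      (f := fun l v => form (2 * M) a (l * v 0) (l⁻¹ * v 1)) ?_ ?_
    · exact tendsto_pi_nhds.2 fun v => tendsto_mid h _ _
    · filter_upwards [self_mem_nhdsWithin] with l hl
      exact ⟨Units.mk0 l hl, rfl⟩
  · refine mem_closure_of_tendsto (b := 𝓝[≠] (0 : ℂ))
      (f := fun l v => form (2 * M) a (l⁻¹ * v 0) (l * v 1)) ?_ ?_
    · refine tendsto_pi_nhds.2 fun v => ?_
      have h1 := tendsto_mid (M := M) (a := fun i => a (2 * M - i))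
        (fun i hi => h _ (by omega) (by omega)) (v 1) (v 0)
      simp only [form_swap] at h1
      rw [show 2 * M - M = M by omega] at h1
      convert h1 using 2
      ring
    · filter_upwards [self_mem_nhdsWithin] with l hl
      exact ⟨(Units.mk0 l hl)⁻¹, rfl⟩

lemma eq_zero_of_TO_closed {M : ℕ} {a : ℕ → ℂ} (hc : IsClosed (TO (2 * M) a))
    (h : (∀ i < M, a i = 0) ∨ ∀ i ≤ 2 * M, M < i → a i = 0) :
    ∀ i ≤ 2 * M, i ≠ M → a i = 0 := by
  have h1 := mid_mem_closure_TO h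
  rw [hc.closure_eq] at h1
  obtain ⟨l, hl⟩ := h1
  intro i hi hne
  have h2 : ∀ x y, form (2 * M) (fun i => a i * (l : ℂ) ^ i * ((l⁻¹ : ℂˣ) : ℂ) ^ (2 * M - i)) x y =
      form (2 * M) (fun i => if i = M then a M else 0) x y := by
    intro x y
    rw [← form_scale, form_single (M := M) (a := fun i => if i = M then a M else 0) (by omega)
      (by intro i _ h; simp [h])]
    have := congrFun hl ![x, y]
    simp only [Matrix.cons_val_zero, Matrix.cons_val_one] at this
    rw [this, if_pos rfl, show 2 * M - M = M by omega]
  have h3 := coeff_unique h2 hi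
  simpa [hne] using h3

lemma TO_closed_of_mid {M : ℕ} {a : ℕ → ℂ} (h : ∀ i ≤ 2 * M, i ≠ M → a i = 0) :
    IsClosed (TO (2 * M) a) := by
  have : TO (2 * M) a = {fun v => a M * v 0 ^ M * v 1 ^ M} := by
    have key : ∀ l : ℂˣ, (fun v : Fin 2 → ℂ => form (2 * M) a (l * v 0) ((l⁻¹ : ℂˣ) * v 1)) =
        fun v => a M * v 0 ^ M * v 1 ^ M := by
      intro l
      funext v
      rw [form_single (M := M) (by omega) h, show 2 * M - M = M by omega, mul_pow, mul_pow,
        Units.val_inv_eq_inv_val, inv_pow]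
      have := pow_ne_zero M l.ne_zero
      field_simp
    unfold TO
    rw [funext key]
    exact Set.range_const
  rw [this]
  exact isClosed_singleton

lemma le_max_of_pow_le {x B : ℝ} {n : ℕ} (hn : n ≠ 0) (h : x ^ n ≤ B) : x ≤ max 1 B := by
  by_contra! hlt
  have h1 : 1 < x := (le_max_left _ _).trans_lt hlt
  have h2 : B < x := (le_max_right _ _).trans_lt hlt
  have := le_self_pow₀ h1.le hn
  linarith

lemma tendsto_co {α : Type*} {l : Filter α} (N i : ℕ) {Φ : α → (Fin 2 → ℂ) → ℂ}
    {F : (Fin 2 → ℂ) → ℂ} (h : Tendsto Φ l (𝓝 F)) :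
    Tendsto (fun g => co N (Φ g) i) l (𝓝 (co N F i)) :=
  ((continuous_co N i).tendsto F).comp h

/-- If a coefficient on each side of the middle one is nonzero, then `l` and `l⁻¹` are both bounded
as long as `diag(l, l⁻¹)` moves the form within a bounded set. -/
lemma TO_closed_of_both {M : ℕ} {a : ℕ → ℂ} {i j : ℕ} (hi : i < M) (hj : M < j) (hj' : j ≤ 2 * M)
    (hai : a i ≠ 0) (haj : a j ≠ 0) : IsClosed (TO (2 * M) a) := by
  refine isClosed_range_of_ultra _ fun 𝒰 F hF => ?_
  have hco : ∀ m ≤ 2 * M, Tendsto (fun l : ℂˣ => a m * (l : ℂ) ^ m * ((l⁻¹ : ℂˣ) : ℂ) ^ (2 * M - m))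
      𝒰 (𝓝 (co (2 * M) F m)) := by
    intro m hm
    refine (tendsto_co (2 * M) m hF).congr fun l => ?_
    exact co_eq (a := fun m => a m * (l : ℂ) ^ m * ((l⁻¹ : ℂˣ) : ℂ) ^ (2 * M - m))
      (fun x y => form_scale _ _ _ _ _ _) hm
  have hbd : ∃ B : ℝ, ∀ᶠ l : ℂˣ in (𝒰 : Filter ℂˣ), ‖((l⁻¹ : ℂˣ) : ℂ)‖ ≤ B := by
    refine ⟨max 1 ((‖co (2 * M) F i‖ + 1) / ‖a i‖), ?_⟩
    filter_upwards [bdd_of_tendsto (hco i (by omega))] with l hl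
    refine le_max_of_pow_le (n := 2 * M - i - i) (by omega) ?_
    rw [le_div_iff₀ (norm_pos_iff.2 hai)]
    refine le_trans (le_of_eq ?_) hl
    rw [← norm_pow, ← norm_mul]
    congr 1
    rw [Units.val_inv_eq_inv_val, show 2 * M - i = (2 * M - i - i) + i by omega,
      pow_add, inv_pow _ i]
    have := pow_ne_zero i l.ne_zero
    simp only [Nat.add_sub_cancel]
    field_simp
  have hbd' : ∃ B : ℝ, ∀ᶠ l : ℂˣ in (𝒰 : Filter ℂˣ), ‖(l : ℂ)‖ ≤ B := by
    refine ⟨max 1 ((‖co (2 * M) F j‖ + 1) / ‖a j‖), ?_⟩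
    filter_upwards [bdd_of_tendsto (hco j (by omega))] with l hl
    refine le_max_of_pow_le (n := j - (2 * M - j)) (by omega) ?_
    rw [le_div_iff₀ (norm_pos_iff.2 haj)]
    refine le_trans (le_of_eq ?_) hl
    rw [← norm_pow, ← norm_mul]
    congr 1
    have e : (l : ℂ) ^ j = (l : ℂ) ^ (j - (2 * M - j)) * (l : ℂ) ^ (2 * M - j) := by
      rw [← pow_add]; congr 1; omega
    rw [Units.val_inv_eq_inv_val, e, inv_pow]
    have := pow_ne_zero (2 * M - j) l.ne_zero
    field_simp
  obtain ⟨B, hB⟩ := hbd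
  obtain ⟨B', hB'⟩ := hbd'
  obtain ⟨w, hw⟩ := ultra_bdd 𝒰 _ B hB
  obtain ⟨z, hz⟩ := ultra_bdd 𝒰 _ B' hB'
  have hzw : z * w = 1 := by
    refine tendsto_nhds_unique (hz.mul hw) ?_
    simp
  refine ⟨⟨z, w, hzw, by rw [mul_comm, hzw]⟩, ?_⟩
  funext v
  refine tendsto_nhds_unique ?_ (tendsto_pi_nhds.1 hF v)
  simp only [Units.inv_mk]
  exact (tendsto_finsetSum _ fun m _ => ((tendsto_const_nhds.mul ((hz.mul_const (v 0)).pow m)).mul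
    ((hw.mul_const (v 1)).pow _)))

/-! ### Forms in the slice -/

lemma coeff_sum_C_mul_X_pow {N : ℕ} (a : ℕ → ℂ) {m : ℕ} (hm : m ≤ N) :
    (∑ i ∈ Finset.range (N + 1), Polynomial.C (a i) * Polynomial.X ^ i).coeff m = a m := by
  rw [Polynomial.finsetSum_coeff, Finset.sum_eq_single m]
  · simp
  · intro i _ hne
    rw [Polynomial.coeff_C_mul_X_pow, if_neg (Ne.symm hne)]
  · intro h; simp at h; omega

/-- A form in the slice, without monomials on one side of the middle, which lies in the
`GL(2,ℂ)`-orbit of a multiple of `x ^ M * y ^ M`, is a multiple of `x ^ M * y ^ M`: it is of the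
shape `c * x ^ M * (α * x + e * y) ^ M`, and its coefficient at `M + 1` is
`c * M * α * e ^ (M - 1)`. -/
lemma mid_of_product {M : ℕ} (hM : 1 ≤ M) {a : ℕ → ℂ} {c p q r s : ℂ}
    (h : ∀ x y, form (2 * M) a x y = c * (p * x + q * y) ^ M * (r * x + s * y) ^ M) (hc : c ≠ 0)
    (hdet : p * s - q * r ≠ 0) (h0 : ∀ i < M, a i = 0) (h1 : a (M + 1) = 0) :
    ∀ i ≤ 2 * M, i ≠ M → a i = 0 := by
  have hqs : q * s = 0 := by
    have e := h 0 1
    have e2 : form (2 * M) a 0 1 = a 0 := by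
      rw [form, Finset.sum_eq_single 0]
      · simp
      · intro i _ hi; simp [hi]
      · simp
    rw [e2, h0 0 (by omega)] at e
    have : c * (q * s) ^ M = 0 := by rw [mul_pow, ← mul_assoc]; simpa using e.symm
    rcases mul_eq_zero.1 this with h | h
    · exact absurd h hc
    · exact pow_eq_zero_iff (by omega) |>.1 h
  have he : p * s + q * r ≠ 0 := by
    intro he
    apply hdet
    have : (p * s - q * r) ^ 2 = 0 := by linear_combination (p * s + q * r) * he - 4 * p * r * hqs
    exact pow_eq_zero_iff (by norm_num) |>.1 this
  have hP : ∑ i ∈ Finset.range (2 * M + 1), Polynomial.C (a i) * Polynomial.X ^ i =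
      Polynomial.C c * (Polynomial.C (p * r) * Polynomial.X + Polynomial.C (p * s + q * r)) ^ M *
        Polynomial.X ^ M := by
    refine Polynomial.funext fun x => ?_
    have e := h x 1
    have e2 : (p * x + q * 1) * (r * x + s * 1) = (p * r * x + (p * s + q * r)) * x := by
      linear_combination hqs
    rw [mul_assoc, ← mul_pow, e2, mul_pow, ← mul_assoc] at e
    rw [Polynomial.eval_finsetSum]
    simpa [form] using e
  have hpr : p * r = 0 := by
    have e := congrArg (fun P => Polynomial.coeff P (M + 1)) hP
    rw [coeff_sum_C_mul_X_pow a (by omega), h1, add_comm M 1, Polynomial.coeff_mul_X_pow,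
      Polynomial.coeff_C_mul] at e
    generalize p * r = α at e ⊢
    generalize p * s + q * r = ε at e he
    have e3 := Polynomial.coeff_derivative
      ((Polynomial.C α * Polynomial.X + Polynomial.C ε) ^ M) 0
    rw [Polynomial.coeff_zero_eq_eval_zero, Polynomial.derivative_pow] at e3
    simp at e3
    rw [← e3] at e
    have hM' : (M : ℂ) ≠ 0 := by exact_mod_cast (by omega : M ≠ 0)
    have := pow_ne_zero (M - 1) he
    have e4 := e.symm
    simp only [mul_eq_zero, hc, hM', this, false_or] at e4
    exact e4
  intro i hi hne
  have e := congrArg (fun P => Polynomial.coeff P i) hP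
  rw [coeff_sum_C_mul_X_pow a hi, hpr] at e
  rw [e]
  simp only [map_zero, zero_mul, zero_add, ← Polynomial.C_pow, ← Polynomial.C_mul]
  rw [Polynomial.coeff_C_mul_X_pow, if_neg hne]

/-- If a small perturbation of `x ^ M * y ^ M` in the slice has a root of multiplicity at least `M`
at `[k00 : k10]` and this point is not closer to `[1 : 0]` than to `[0 : 1]`, then the root is
`[0 : 1]`. The `(M - 1)`-st derivative along `x` at the root vanishes; by the slice condition it
is `k00` times a quantity which is dominated by the term of `x ^ M * y ^ M`. -/
lemma low_coeff_zero {M : ℕ} (hM : 1 ≤ M) {a b : ℕ → ℂ} {k00 k01 k10 k11 : ℂ}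
    (hdet : k00 * k11 - k01 * k10 ≠ 0)
    (h : ∀ x y, form (2 * M) a (k00 * x + k01 * y) (k10 * x + k11 * y) = form (2 * M) b x y)
    (hb : ∀ i ≤ 2 * M, M < i → b i = 0) (ha : a (M - 1) = 0)
    (hs : ∑ i ∈ (Finset.range (2 * M + 1)).erase M, 2 ^ (2 * M) * ‖a i‖ < ‖a M‖)
    (hu : ‖k00‖ ≤ ‖k10‖) : ∀ i < M, a i = 0 := by
  have hk10 : k10 ≠ 0 := by
    rintro rfl
    have : k00 = 0 := by simpa using hu
    simp [this] at hdet
  set D := k00 * k11 - k01 * k10 with hD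
  have hPQ : ∑ i ∈ Finset.range (2 * M + 1), Polynomial.C (a i * k10 ^ (2 * M - i)) *
      (Polynomial.X + Polynomial.C k00) ^ i =
      ∑ i ∈ Finset.range (2 * M + 1), Polynomial.C (b i) *
        (1 + Polynomial.C (k11 / D) * Polynomial.X) ^ i *
        (Polynomial.C (-k10 / D) * Polynomial.X) ^ (2 * M - i) := by
    refine Polynomial.funext fun x => ?_
    have e := h (1 + k11 / D * x) (-k10 / D * x)
    have e1 : k00 * (1 + k11 / D * x) + k01 * (-k10 / D * x) = x + k00 := by
      field_simp
      rw [hD]; ring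
    have e2 : k10 * (1 + k11 / D * x) + k11 * (-k10 / D * x) = k10 := by
      field_simp
      ring
    rw [e1, e2] at e
    rw [Polynomial.eval_finsetSum, Polynomial.eval_finsetSum]
    simp only [Polynomial.eval_mul, Polynomial.eval_pow, Polynomial.eval_add, Polynomial.eval_X,
      Polynomial.eval_C, Polynomial.eval_one]
    refine Eq.trans ?_ e
    exact Finset.sum_congr rfl fun i _ => by ring
  have hdvd : Polynomial.X ^ M ∣ ∑ i ∈ Finset.range (2 * M + 1),
      Polynomial.C (a i * k10 ^ (2 * M - i)) * (Polynomial.X + Polynomial.C k00) ^ i := by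
    rw [hPQ]
    refine Finset.dvd_sum fun i hi => ?_
    have hi' : i ≤ 2 * M := by simpa [Nat.lt_succ_iff] using hi
    by_cases hiM : M < i
    · rw [hb i hi' hiM]; simp
    · rw [mul_pow]
      exact Dvd.dvd.mul_left (Dvd.dvd.mul_left (pow_dvd_pow _ (by omega)) _) _
  have hcoef : ∀ m < M, ∑ i ∈ Finset.range (2 * M + 1),
      a i * k10 ^ (2 * M - i) * (k00 ^ (i - m) * (i.choose m : ℂ)) = 0 := by
    intro m hm
    have := Polynomial.X_pow_dvd_iff.1 hdvd m hm
    rw [Polynomial.finsetSum_coeff] at this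
    simpa only [Polynomial.coeff_C_mul, Polynomial.coeff_X_add_C_pow] using this
  have hk00 : k00 = 0 := by
    by_contra hk00
    have e := hcoef (M - 1) (by omega)
    rw [← Finset.add_sum_erase _ _ (Finset.mem_range.2 (by omega : M < 2 * M + 1))] at e
    have e1 := eq_neg_of_add_eq_zero_left e
    have e2 := congrArg norm e1
    rw [norm_neg] at e2
    have hpos : 0 < ‖k00‖ * ‖k10‖ ^ M := by
      have := norm_pos_iff.2 hk00
      have := norm_pos_iff.2 hk10
      positivity
    have hle : ∀ i ∈ (Finset.range (2 * M + 1)).erase M,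
        ‖a i * k10 ^ (2 * M - i) * (k00 ^ (i - (M - 1)) * (i.choose (M - 1) : ℂ))‖ ≤
          2 ^ (2 * M) * ‖a i‖ * (‖k00‖ * ‖k10‖ ^ M) := by
      intro i hi
      obtain ⟨hiM, hi⟩ := Finset.mem_erase.1 hi
      have hi' : i ≤ 2 * M := by simpa [Nat.lt_succ_iff] using hi
      rcases lt_or_ge i M with hlt | hge
      · have : a i = 0 ∨ i.choose (M - 1) = 0 := by
          rcases eq_or_ne i (M - 1) with rfl | hne
          · exact Or.inl ha
          · exact Or.inr (Nat.choose_eq_zero_of_lt (by omega))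
        rcases this with h | h
        · simp [h]
        · rw [h]; simp; positivity
      · have c1 : (i.choose (M - 1) : ℝ) ≤ 2 ^ (2 * M) := by
          have h1 := Nat.choose_le_two_pow i (M - 1)
          have h2 : 2 ^ i ≤ 2 ^ (2 * M) := Nat.pow_le_pow_right (by norm_num) hi'
          exact_mod_cast h1.trans h2
        have c2 : ‖k10‖ ^ (2 * M - i) * ‖k00‖ ^ (i - (M - 1)) ≤ ‖k00‖ * ‖k10‖ ^ M := by
          rw [show i - (M - 1) = (i - M) + 1 by omega, pow_succ]
          have : ‖k00‖ ^ (i - M) ≤ ‖k10‖ ^ (i - M) := by gcongr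
          calc ‖k10‖ ^ (2 * M - i) * (‖k00‖ ^ (i - M) * ‖k00‖)
              ≤ ‖k10‖ ^ (2 * M - i) * (‖k10‖ ^ (i - M) * ‖k00‖) := by gcongr
            _ = ‖k00‖ * (‖k10‖ ^ (2 * M - i) * ‖k10‖ ^ (i - M)) := by ring
            _ = ‖k00‖ * ‖k10‖ ^ M := by
              rw [← pow_add]; congr 2; omega
        simp only [norm_mul, norm_pow, Complex.norm_natCast]
        calc ‖a i‖ * ‖k10‖ ^ (2 * M - i) * (‖k00‖ ^ (i - (M - 1)) * (i.choose (M - 1) : ℝ))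
            = (i.choose (M - 1) : ℝ) * ‖a i‖ *
              (‖k10‖ ^ (2 * M - i) * ‖k00‖ ^ (i - (M - 1))) := by ring
          _ ≤ _ := by gcongr
    have hsum := (norm_sum_le _ _).trans (Finset.sum_le_sum hle)
    rw [← e2, ← Finset.sum_mul] at hsum
    have hlow : ‖a M‖ * (‖k00‖ * ‖k10‖ ^ M) ≤
        ‖a M * k10 ^ (2 * M - M) * (k00 ^ (M - (M - 1)) * (M.choose (M - 1) : ℂ))‖ := by
      rw [show 2 * M - M = M by omega, show M - (M - 1) = 1 by omega]
      simp only [norm_mul, norm_pow, Complex.norm_natCast, pow_one]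
      have : (1 : ℝ) ≤ (M.choose (M - 1) : ℝ) := by
        exact_mod_cast Nat.choose_pos (by omega)
      have h3 : 0 ≤ ‖a M‖ * ‖k10‖ ^ M * ‖k00‖ := by positivity
      nlinarith
    have := (hlow.trans hsum).trans_lt (mul_lt_mul_of_pos_right hs hpos)
    exact lt_irrefl _ this
  intro m hm
  have e := hcoef m hm
  rw [Finset.sum_eq_single m] at e
  · simpa [hk10] using e
  · intro i _ hne
    rcases lt_or_gt_of_ne hne with hlt | hgt
    · rw [Nat.choose_eq_zero_of_lt hlt]; simp
    · rw [hk00, zero_pow (by omega)]; ring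
  · intro h; simp at h; omega

/-! ### Closedness of the `SL(2,ℂ)`-orbit -/

lemma exists_factor_aux {u0 u1 w0 w1 : ℂ} (hdet : u0 * w1 - w0 * u1 = 1)
    (hle : Complex.normSq w0 + Complex.normSq w1 ≤ Complex.normSq u0 + Complex.normSq u1) :
    ∃ (k : Matrix (Fin 2) (Fin 2) ℂ) (t : ℝ) (c : ℂ), 1 ≤ t ∧ (∀ i j, ‖k i j‖ ≤ 1) ∧ ‖c‖ ≤ 1 ∧
      k 0 0 * k 1 1 - k 0 1 * k 1 0 = 1 ∧
      u0 = k 0 0 * t ∧ u1 = k 1 0 * t ∧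
      w0 = k 0 0 * t * c + k 0 1 * (t : ℂ)⁻¹ ∧ w1 = k 1 0 * t * c + k 1 1 * (t : ℂ)⁻¹ := by
  set S := Complex.normSq u0 + Complex.normSq u1 with hS
  set c' := (starRingEnd ℂ) u0 * w0 + (starRingEnd ℂ) u1 * w1 with hc'
  -- Lagrange's identity `|⟨u, w⟩|² + |det (u, w)|² = |u|² |w|²`
  have hlag : Complex.normSq c' + 1 = S * (Complex.normSq w0 + Complex.normSq w1) := by
    have h1 : Complex.normSq (u0 * w1 - w0 * u1) = 1 := by rw [hdet]; simp
    rw [← h1, hS, hc']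
    simp only [Complex.normSq_apply, Complex.add_re, Complex.add_im, Complex.mul_re, Complex.mul_im,
      Complex.sub_re, Complex.sub_im, Complex.conj_re, Complex.conj_im]
    ring
  have hS0 : 0 ≤ S := add_nonneg (Complex.normSq_nonneg _) (Complex.normSq_nonneg _)
  have hc0 := Complex.normSq_nonneg c'
  have hSS : Complex.normSq c' + 1 ≤ S * S := by rw [hlag]; gcongr
  have hS1 : 1 ≤ S := by nlinarith
  have ht1 : 1 ≤ Real.sqrt S := Real.one_le_sqrt.2 hS1
  have ht2 : Real.sqrt S ^ 2 = S := Real.sq_sqrt hS0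
  set t := Real.sqrt S with ht
  have ht0 : 0 < t := by linarith
  have htC : (t : ℂ) ≠ 0 := by exact_mod_cast ht0.ne'
  have htS : (t : ℂ) ^ 2 = u0 * (starRingEnd ℂ) u0 + u1 * (starRingEnd ℂ) u1 := by
    rw [Complex.mul_conj, Complex.mul_conj, ← Complex.ofReal_add, ← hS, ← ht2]
    push_cast; rfl
  have n0 : ‖u0‖ ≤ t := by
    apply Real.le_sqrt_of_sq_le
    rw [← Complex.normSq_eq_norm_sq]
    linarith [Complex.normSq_nonneg u1]
  have n1 : ‖u1‖ ≤ t := by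
    apply Real.le_sqrt_of_sq_le
    rw [← Complex.normSq_eq_norm_sq]
    linarith [Complex.normSq_nonneg u0]
  refine ⟨!![u0 / t, -(starRingEnd ℂ) u1 / t; u1 / t, (starRingEnd ℂ) u0 / t], t, c' / t ^ 2, ht1,
    ?_, ?_, ?_, ?_, ?_, ?_, ?_⟩
  · intro i j
    have q0 : ‖u0‖ / t ≤ 1 := (div_le_one ht0).2 n0
    have q1 : ‖u1‖ / t ≤ 1 := (div_le_one ht0).2 n1
    fin_cases i <;> fin_cases j <;> simp [abs_of_pos ht0, q0, q1]
  · rw [norm_div, norm_pow, Complex.norm_real, Real.norm_eq_abs, abs_of_pos ht0, ht2]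
    refine (div_le_one (by linarith)).2 ?_
    refine abs_le_of_sq_le_sq' ?_ hS0 |>.2
    rw [← Complex.normSq_eq_norm_sq]
    nlinarith
  · simp only [Matrix.of_apply, Matrix.cons_val', Matrix.cons_val_zero, Matrix.cons_val_one,
      Matrix.cons_val_fin_one]
    field_simp
    rw [htS]; ring
  · simp; field_simp
  · simp; field_simp
  · simp only [Matrix.of_apply, Matrix.cons_val', Matrix.cons_val_zero, Matrix.cons_val_one,
      Matrix.cons_val_fin_one]
    field_simp
    rw [htS, hc']
    linear_combination -(starRingEnd ℂ) u1 * hdet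
  · simp only [Matrix.of_apply, Matrix.cons_val', Matrix.cons_val_zero, Matrix.cons_val_one,
      Matrix.cons_val_fin_one]
    field_simp
    rw [htS, hc']
    linear_combination (starRingEnd ℂ) u0 * hdet

/-- A form of the Cartan decomposition of `SL(2,ℂ)`: every element is `k * diag(t, t⁻¹) * n` with
`t ≥ 1` and with `k`, `n` in a fixed compact set of matrices of determinant one. -/
lemma exists_factor (g : Matrix.SpecialLinearGroup (Fin 2) ℂ) :
    ∃ (k n : Matrix (Fin 2) (Fin 2) ℂ) (t : ℝ), 1 ≤ t ∧ (∀ i j, ‖k i j‖ ≤ 1) ∧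
      (∀ i j, ‖n i j‖ ≤ 1) ∧ k 0 0 * k 1 1 - k 0 1 * k 1 0 = 1 ∧
      n 0 0 * n 1 1 - n 0 1 * n 1 0 = 1 ∧
      ∀ i j, g.1 i j = k i 0 * t * n 0 j + k i 1 * (t : ℂ)⁻¹ * n 1 j := by
  have hg := g.2
  rw [Matrix.det_fin_two] at hg
  rcases le_total (Complex.normSq (g.1 0 1) + Complex.normSq (g.1 1 1))
    (Complex.normSq (g.1 0 0) + Complex.normSq (g.1 1 0)) with hle | hle
  · obtain ⟨k, t, c, ht, hk, hc, hd, e1, e2, e3, e4⟩ := exists_factor_aux hg hle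
    refine ⟨k, !![1, c; 0, 1], t, ht, hk, ?_, hd, by simp, ?_⟩
    · intro i j; fin_cases i <;> fin_cases j <;> simp [hc]
    · intro i j; fin_cases i <;> fin_cases j <;> simp [e1, e2, e3, e4]
  · obtain ⟨k, t, c, ht, hk, hc, hd, e1, e2, e3, e4⟩ :=
      exists_factor_aux (u0 := g.1 0 1) (u1 := g.1 1 1) (w0 := -g.1 0 0) (w1 := -g.1 1 0)
        (by linear_combination hg) (by simpa using hle)
    refine ⟨k, !![-c, 1; -1, 0], t, ht, hk, ?_, hd, by simp, ?_⟩
    · intro i j; fin_cases i <;> fin_cases j <;> simp [hc]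
    · intro i j; fin_cases i <;> fin_cases j <;> simp
      · linear_combination -e3
      · exact e1
      · linear_combination -e4
      · exact e2

lemma tendsto_form {α : Type*} {l : Filter α} (N : ℕ) {a : α → ℕ → ℂ} {a' : ℕ → ℂ} {x y : α → ℂ}
    {x' y' : ℂ} (ha : ∀ i, Tendsto (fun g => a g i) l (𝓝 (a' i))) (hx : Tendsto x l (𝓝 x'))
    (hy : Tendsto y l (𝓝 y')) :
    Tendsto (fun g => form N (a g) (x g) (y g)) l (𝓝 (form N a' x' y')) :=
  tendsto_finsetSum _ fun i _ => ((ha i).mul (hx.pow i)).mul (hy.pow _)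

/-- A stable form has closed orbit. Stability says that no form in the orbit is divisible by
`y ^ M`. If `f ∘ g` converges along an ultrafilter with `g = k * diag(t, t⁻¹) * n` and `t → ∞`,
then the coefficients of `f ∘ k ∘ diag(t, t⁻¹)` stay bounded, and the limit of `k` violates
stability. -/
lemma SO_closed_of_stable {M : ℕ} {a : ℕ → ℂ}
    (hst : ∀ (k : Matrix (Fin 2) (Fin 2) ℂ) (b : ℕ → ℂ), k 0 0 * k 1 1 - k 0 1 * k 1 0 = 1 →
      (∀ x y, form (2 * M) a (k 0 0 * x + k 0 1 * y) (k 1 0 * x + k 1 1 * y) =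
        form (2 * M) b x y) → ¬ ∀ i ≤ 2 * M, M < i → b i = 0) :
    IsClosed (SO (2 * M) a) := by
  refine isClosed_range_of_ultra _ fun 𝒰 F hF => ?_
  choose k n t ht hk hn hdk hdn hg using exists_factor
  have hK : ∀ i j, ∃ z, Tendsto (fun g => k g i j) 𝒰 (𝓝 z) := fun i j =>
    ultra_bdd 𝒰 _ 1 (Eventually.of_forall fun g => hk g i j)
  have hN : ∀ i j, ∃ z, Tendsto (fun g => n g i j) 𝒰 (𝓝 z) := fun i j =>
    ultra_bdd 𝒰 _ 1 (Eventually.of_forall fun g => hn g i j)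
  choose K hK using hK
  choose n' hN using hN
  have ht0 : ∀ g, (t g : ℂ) ≠ 0 := fun g => by
    have := ht g
    exact_mod_cast (by linarith : (0 : ℝ) < t g).ne'
  have hT : ∃ z, Tendsto (fun g => (t g : ℂ)⁻¹) 𝒰 (𝓝 z) := by
    refine ultra_bdd 𝒰 _ 1 (Eventually.of_forall fun g => ?_)
    rw [norm_inv, Complex.norm_real, Real.norm_eq_abs, abs_of_pos (by linarith [ht g])]
    exact inv_le_one_of_one_le₀ (ht g)
  obtain ⟨s', hs'⟩ := hT
  by_cases hbdd : ∃ B : ℝ, ∀ᶠ g in (𝒰 : Filter (Matrix.SpecialLinearGroup (Fin 2) ℂ)), t g ≤ B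
  · obtain ⟨B, hB⟩ := hbdd
    obtain ⟨t', ht'⟩ := ultra_bdd 𝒰 (fun g => (t g : ℂ)) B (by
      filter_upwards [hB] with g hg
      rwa [Complex.norm_real, Real.norm_eq_abs, abs_of_pos (by linarith [ht g])])
    have hG : ∀ i j, Tendsto (fun g : Matrix.SpecialLinearGroup (Fin 2) ℂ => g.1 i j) 𝒰
        (𝓝 (K i 0 * t' * n' 0 j + K i 1 * s' * n' 1 j)) := by
      intro i j
      simp only [hg]
      exact (((hK i 0).mul ht').mul (hN 0 j)).add (((hK i 1).mul hs').mul (hN 1 j))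
    let G : Matrix (Fin 2) (Fin 2) ℂ := fun i j => K i 0 * t' * n' 0 j + K i 1 * s' * n' 1 j
    have hG' : ∀ i j, Tendsto (fun g : Matrix.SpecialLinearGroup (Fin 2) ℂ => g.1 i j) 𝒰
        (𝓝 (G i j)) := hG
    have hdet : G.det = 1 := by
      rw [Matrix.det_fin_two]
      refine tendsto_nhds_unique
        (((hG' 0 0).mul (hG' 1 1)).sub ((hG' 0 1).mul (hG' 1 0))) ?_
      refine tendsto_const_nhds.congr fun g => ?_
      have := g.2
      rw [Matrix.det_fin_two] at this
      exact this.symm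
    refine ⟨⟨G, hdet⟩, ?_⟩
    funext v
    refine tendsto_nhds_unique ?_ (tendsto_pi_nhds.1 hF v)
    exact tendsto_form _ (fun _ => tendsto_const_nhds)
      (((hG' 0 0).mul_const _).add ((hG' 0 1).mul_const _))
      (((hG' 1 0).mul_const _).add ((hG' 1 1).mul_const _))
  · exfalso
    have htop : Tendsto t 𝒰 atTop := by
      refine tendsto_atTop.2 fun B => ?_
      have := Ultrafilter.eventually_not.2 (fun h => hbdd ⟨B, h⟩)
      filter_upwards [this] with g hg
      exact (not_le.1 hg).le
    have hs0 : Tendsto (fun g => (t g : ℂ)⁻¹) 𝒰 (𝓝 0) := by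
      have h1 := (tendsto_inv_atTop_zero.comp htop)
      have h2 := (Complex.continuous_ofReal.tendsto 0).comp h1
      simpa [Function.comp_def] using h2
    set Φ : Matrix.SpecialLinearGroup (Fin 2) ℂ → (Fin 2 → ℂ) → ℂ := fun g v =>
      form (2 * M) a (g.1 0 0 * v 0 + g.1 0 1 * v 1) (g.1 1 0 * v 0 + g.1 1 1 * v 1) with hΦ
    set Ψ : Matrix.SpecialLinearGroup (Fin 2) ℂ → (Fin 2 → ℂ) → ℂ := fun g v =>
      form (2 * M) (co (2 * M) (Φ g)) (n g 1 1 * v 0 - n g 0 1 * v 1)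
        (-n g 1 0 * v 0 + n g 0 0 * v 1) with hΨ
    set Θ : Matrix.SpecialLinearGroup (Fin 2) ℂ → (Fin 2 → ℂ) → ℂ := fun g v =>
      form (2 * M) a (k g 0 0 * v 0 + k g 0 1 * v 1) (k g 1 0 * v 0 + k g 1 1 * v 1) with hΘ
    set Θ' : (Fin 2 → ℂ) → ℂ := fun v =>
      form (2 * M) a (K 0 0 * v 0 + K 0 1 * v 1) (K 1 0 * v 0 + K 1 1 * v 1) with hΘ'
    have hΨlim : ∃ Ψ', Tendsto Ψ 𝒰 (𝓝 Ψ') := by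
      refine ⟨_, tendsto_pi_nhds.2 fun v => tendsto_form _ (fun i => tendsto_co _ i hF)
        (((hN 1 1).mul_const _).sub ((hN 0 1).mul_const _))
        (((hN 1 0).neg.mul_const _).add ((hN 0 0).mul_const _))⟩
    obtain ⟨Ψ', hΨ'⟩ := hΨlim
    have hΘlim : Tendsto Θ 𝒰 (𝓝 Θ') :=
      tendsto_pi_nhds.2 fun v => tendsto_form _ (fun _ => tendsto_const_nhds)
        (((hK 0 0).mul_const _).add ((hK 0 1).mul_const _))
        (((hK 1 0).mul_const _).add ((hK 1 1).mul_const _))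
    have hΘform : ∀ g x y, form (2 * M) (co (2 * M) (Θ g)) x y = Θ g ![x, y] := by
      intro g
      obtain ⟨b, hb⟩ := form_subst (2 * M) a (k g 0 0) (k g 0 1) (k g 1 0) (k g 1 1)
      exact form_co (a := b) (by simpa [hΘ] using hb)
    have hΦform : ∀ g x y, form (2 * M) (co (2 * M) (Φ g)) x y = Φ g ![x, y] := by
      intro g
      obtain ⟨b, hb⟩ := form_subst (2 * M) a (g.1 0 0) (g.1 0 1) (g.1 1 0) (g.1 1 1)
      exact form_co (a := b) (by simpa [hΦ] using hb)
    have hΨΘ : ∀ g x y, Ψ g ![x, y] = form (2 * M)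
        (fun i => co (2 * M) (Θ g) i * (t g : ℂ) ^ i * ((t g : ℂ)⁻¹) ^ (2 * M - i)) x y := by
      intro g x y
      rw [← form_scale, hΘform]
      simp only [hΨ]
      rw [hΦform]
      simp only [hΦ, hΘ, Matrix.cons_val_zero, Matrix.cons_val_one, hg]
      congr 1
      · linear_combination (k g 0 0 * t g * x + k g 0 1 * (t g : ℂ)⁻¹ * y) * hdn g
      · linear_combination (k g 1 0 * t g * x + k g 1 1 * (t g : ℂ)⁻¹ * y) * hdn g
    have hcoΘ : ∀ i ≤ 2 * M, M < i → co (2 * M) Θ' i = 0 := by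
      intro i hi hMi
      have h1 : ∀ g, co (2 * M) (Θ g) i = co (2 * M) (Ψ g) i * ((t g : ℂ)⁻¹) ^ (2 * (i - M)) := by
        intro g
        rw [co_eq (hΨΘ g) hi]
        have e : ((t g : ℂ)⁻¹) ^ (2 * M - i) * ((t g : ℂ)⁻¹) ^ (2 * (i - M)) = ((t g : ℂ)⁻¹) ^ i := by
          rw [← pow_add]; congr 1; omega
        rw [mul_assoc, e, inv_pow, mul_assoc, mul_inv_cancel₀ (pow_ne_zero _ (ht0 g)), mul_one]
      refine tendsto_nhds_unique (tendsto_co (2 * M) i hΘlim) ?_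
      simp only [h1]
      have := (tendsto_co (2 * M) i hΨ').mul (hs0.pow (2 * (i - M)))
      rwa [zero_pow (by omega), mul_zero] at this
    refine hst K (co (2 * M) Θ') ?_ ?_ hcoΘ
    · refine tendsto_nhds_unique
        (((hK 0 0).mul (hK 1 1)).sub ((hK 0 1).mul (hK 1 0))) ?_
      simp only [hdk]
      exact tendsto_const_nhds
    · intro x y
      obtain ⟨b, hb⟩ := form_subst (2 * M) a (K 0 0) (K 0 1) (K 1 0) (K 1 1)
      rw [form_co (a := b) (by simpa [hΘ'] using hb)]
      simp [hΘ']

/-- A nonzero multiple of `x ^ M * y ^ M` has closed orbit: up to the constant `a M`, the orbit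
consists of the `M`-th powers of the quadratic forms of discriminant one, and the discriminant is
continuous. -/
lemma SO_closed_of_mid {M : ℕ} (hM : 1 ≤ M) {a : ℕ → ℂ} (ha : a M ≠ 0)
    (h : ∀ i ≤ 2 * M, i ≠ M → a i = 0) : IsClosed (SO (2 * M) a) := by
  have hform : ∀ x y, form (2 * M) a x y = a M * (x * y) ^ M := by
    intro x y
    rw [form_single (M := M) (by omega) h, show 2 * M - M = M by omega, mul_pow, mul_assoc]
  refine isClosed_range_of_ultra _ fun 𝒰 F hF => ?_
  simp only [hform] at hF ⊢
  have hv : ∀ v : Fin 2 → ℂ, ∃ z, Tendsto (fun g : Matrix.SpecialLinearGroup (Fin 2) ℂ =>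
      (g.1 0 0 * v 0 + g.1 0 1 * v 1) * (g.1 1 0 * v 0 + g.1 1 1 * v 1)) 𝒰 (𝓝 z) := by
    intro v
    refine ultra_bdd 𝒰 _ (max 1 ((‖F v‖ + 1) / ‖a M‖)) ?_
    filter_upwards [bdd_of_tendsto (tendsto_pi_nhds.1 hF v)] with g hg
    refine le_max_of_pow_le (n := M) (by omega) ?_
    rw [le_div_iff₀ (norm_pos_iff.2 ha), ← norm_pow, ← norm_mul, mul_comm]
    exact hg
  obtain ⟨α, hα⟩ := hv ![1, 0]
  obtain ⟨γ, hγ⟩ := hv ![0, 1]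
  obtain ⟨δ, hδ⟩ := hv ![1, 1]
  simp only [Matrix.cons_val_zero, Matrix.cons_val_one, mul_one, mul_zero, add_zero, zero_add]
    at hα hγ hδ
  obtain ⟨β, hβ⟩ : ∃ β, β = δ - α - γ := ⟨_, rfl⟩
  have hβlim : Tendsto (fun g : Matrix.SpecialLinearGroup (Fin 2) ℂ =>
      g.1 0 0 * g.1 1 1 + g.1 0 1 * g.1 1 0) 𝒰 (𝓝 β) := by
    rw [hβ]
    refine ((hδ.sub hα).sub hγ).congr fun g => ?_
    ring
  have hdisc : β ^ 2 - 4 * α * γ = 1 := by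
    refine tendsto_nhds_unique ((hβlim.pow 2).sub ((hα.const_mul 4).mul hγ)) ?_
    refine tendsto_const_nhds.congr fun g => ?_
    have := g.2
    rw [Matrix.det_fin_two] at this
    linear_combination (-1 - (g.1 0 0 * g.1 1 1 - g.1 0 1 * g.1 1 0)) * this
  have hlim : ∀ v, F v = a M * (α * v 0 ^ 2 + β * v 0 * v 1 + γ * v 1 ^ 2) ^ M := by
    intro v
    refine tendsto_nhds_unique (tendsto_pi_nhds.1 hF v) ?_
    have h1 := (((hα.mul_const (v 0 ^ 2)).add ((hβlim.mul_const (v 0)).mul_const (v 1))).add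
      (hγ.mul_const (v 1 ^ 2))).pow M |>.const_mul (a M)
    refine h1.congr fun g => ?_
    congr 2
    ring
  obtain ⟨p, q, r, s, e1, e2, e3, e4⟩ : ∃ p q r s : ℂ, p * r = α ∧ p * s + q * r = β ∧ q * s = γ ∧
      p * s - q * r = 1 := by
    by_cases hα0 : α = 0
    · subst hα0
      have : (β - 1) * (β + 1) = 0 := by linear_combination hdisc
      rcases mul_eq_zero.1 this with hb | hb
      · exact ⟨1, γ, 0, 1, by ring, by linear_combination -hb, by ring, by ring⟩
      · exact ⟨0, -1, 1, -γ, by ring, by linear_combination -hb, by ring, by ring⟩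
    · refine ⟨1, (β - 1) / (2 * α), α, (β + 1) / 2, by ring, ?_, ?_, ?_⟩
      · field_simp; ring
      · field_simp; linear_combination hdisc
      · field_simp; ring
  refine ⟨⟨!![p, q; r, s], by rw [Matrix.det_fin_two]; simpa using e4⟩, ?_⟩
  funext v
  rw [hlim, ← e1, ← e2, ← e3]
  simp
  left
  ring

/-! ### Comparison of the two orbits -/

lemma TO_subset_SO (N : ℕ) (a : ℕ → ℂ) : TO N a ⊆ SO N a := by
  rintro _ ⟨l, rfl⟩
  refine ⟨⟨!![(l : ℂ), 0; 0, ((l⁻¹ : ℂˣ) : ℂ)], by simp [Matrix.det_fin_two]⟩, ?_⟩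
  funext v
  simp

lemma eq_zero_of_SO_closed {M : ℕ} (hM : 1 ≤ M) {a : ℕ → ℂ} (hm : a M ≠ 0) (h1 : a (M - 1) = 0)
    (h2 : a (M + 1) = 0) (hc : IsClosed (SO (2 * M) a))
    (h : (∀ i < M, a i = 0) ∨ ∀ i ≤ 2 * M, M < i → a i = 0) :
    ∀ i ≤ 2 * M, i ≠ M → a i = 0 := by
  have hmem := closure_mono (TO_subset_SO _ _) (mid_mem_closure_TO h)
  rw [hc.closure_eq] at hmem
  obtain ⟨g, hg⟩ := hmem
  have hdet := g.2
  rw [Matrix.det_fin_two] at hdet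
  have hprod : ∀ x y, form (2 * M) a x y =
      a M * (g.1 1 1 * x + -g.1 0 1 * y) ^ M * (-g.1 1 0 * x + g.1 0 0 * y) ^ M := by
    intro x y
    have := congrFun hg ![g.1 1 1 * x + -g.1 0 1 * y, -g.1 1 0 * x + g.1 0 0 * y]
    simp only [Matrix.cons_val_zero, Matrix.cons_val_one] at this
    rw [← this]
    congr 1
    · linear_combination -x * hdet
    · linear_combination -y * hdet
  rcases h with h | h
  · exact mid_of_product hM hprod hm (by
      rw [show g.1 1 1 * g.1 0 0 - -g.1 0 1 * -g.1 1 0 = 1 by linear_combination hdet]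
      exact one_ne_zero) h h2
  · have hprod' : ∀ x y, form (2 * M) (fun i => a (2 * M - i)) x y =
        a M * (-g.1 0 1 * x + g.1 1 1 * y) ^ M * (g.1 0 0 * x + -g.1 1 0 * y) ^ M := by
      intro x y
      rw [form_swap, hprod, add_comm (g.1 1 1 * y), add_comm (-g.1 1 0 * y)]
    have h3 := mid_of_product hM hprod' hm
      (by rw [show -g.1 0 1 * -g.1 1 0 - g.1 1 1 * g.1 0 0 = -1 by linear_combination -hdet]
          exact neg_ne_zero.2 one_ne_zero)
      (fun i hi => h _ (by omega) (by omega))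
      (by rw [show 2 * M - (M + 1) = M - 1 by omega]; exact h1)
    intro i hi hne
    have := h3 (2 * M - i) (by omega) (by omega)
    rwa [Nat.sub_sub_self hi] at this

/-- The comparison of orbits in terms of coefficients. The hypothesis `hs` is the closeness to a
multiple of `x ^ M * y ^ M`. -/
lemma SO_closed_iff {M : ℕ} (hM : 1 ≤ M) {a : ℕ → ℂ} (h1 : a (M - 1) = 0) (h2 : a (M + 1) = 0)
    (hs : ∑ i ∈ (Finset.range (2 * M + 1)).erase M, 2 ^ (2 * M) * ‖a i‖ < ‖a M‖) :
    IsClosed (SO (2 * M) a) ↔ IsClosed (TO (2 * M) a) := by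
  have hm : a M ≠ 0 := by
    intro h
    rw [h, norm_zero] at hs
    exact absurd hs (not_lt.2 (Finset.sum_nonneg fun i _ => by positivity))
  constructor
  · intro hc
    by_cases hlow : ∀ i < M, a i = 0
    · exact TO_closed_of_mid (eq_zero_of_SO_closed hM hm h1 h2 hc (Or.inl hlow))
    by_cases hhigh : ∀ i ≤ 2 * M, M < i → a i = 0
    · exact TO_closed_of_mid (eq_zero_of_SO_closed hM hm h1 h2 hc (Or.inr hhigh))
    push Not at hlow hhigh
    obtain ⟨i, hi, hai⟩ := hlow
    obtain ⟨j, hj', hj, haj⟩ := hhigh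
    exact TO_closed_of_both hi hj hj' hai haj
  · intro hc
    by_cases hmid : ∀ i ≤ 2 * M, i ≠ M → a i = 0
    · exact SO_closed_of_mid hM hm hmid
    refine SO_closed_of_stable fun k b hk hb hbz => hmid (eq_zero_of_TO_closed hc ?_)
    rcases le_total ‖k 0 0‖ ‖k 1 0‖ with hle | hle
    · exact Or.inl (low_coeff_zero hM (by rw [hk]; exact one_ne_zero) hb hbz h1 hs hle)
    · right
      have hs' : ∑ i ∈ (Finset.range (2 * M + 1)).erase M, 2 ^ (2 * M) * ‖a (2 * M - i)‖ <
          ‖a (2 * M - M)‖ := by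
        have hmem := Finset.mem_range.2 (by omega : M < 2 * M + 1)
        have e1 := Finset.add_sum_erase _ (fun i => 2 ^ (2 * M) * ‖a i‖) hmem
        have e2 := Finset.add_sum_erase _ (fun i => 2 ^ (2 * M) * ‖a (2 * M - i)‖) hmem
        have e3 := Finset.sum_flip (n := 2 * M) (fun i => 2 ^ (2 * M) * ‖a i‖)
        have e4 : 2 * M - M = M := by omega
        simp only [e4] at e2 ⊢
        linarith
      have h3 := low_coeff_zero (a := fun i => a (2 * M - i)) (b := b) (k00 := k 1 0)
        (k01 := k 1 1) (k10 := k 0 0) (k11 := k 0 1) hM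
        (by rw [show k 1 0 * k 0 1 - k 1 1 * k 0 0 = -1 by linear_combination -hk]
            exact neg_ne_zero.2 one_ne_zero)
        (fun x y => by rw [form_swap, hb]) hbz
        (by rw [show 2 * M - (M - 1) = M + 1 by omega]; exact h2) hs' hle
      intro i hi hMi
      have := h3 (2 * M - i) (by omega)
      rwa [Nat.sub_sub_self hi] at this

lemma SLorbit_eq {N : ℕ} {f : MvPolynomial (Fin 2) ℂ} {a : ℕ → ℂ}
    (h : ∀ v, eval v f = form N a (v 0) (v 1)) : SLorbit f = SO N a := by
  ext F
  refine exists_congr fun g => ?_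
  rw [eq_comm]
  simp only [h, Matrix.mulVec, dotProduct, Fin.sum_univ_two]

lemma Torbit_eq {N : ℕ} {f : MvPolynomial (Fin 2) ℂ} {a : ℕ → ℂ}
    (h : ∀ v, eval v f = form N a (v 0) (v 1)) : Torbit f = TO N a := by
  ext F
  constructor
  · rintro ⟨l, hl, rfl⟩
    refine ⟨Units.mk0 l hl, ?_⟩
    funext v
    rw [h]
    simp
  · rintro ⟨l, rfl⟩
    refine ⟨l, l.ne_zero, ?_⟩
    funext v
    rw [h]
    simp

/-- Let `N` be even, `φ = x₀^{N/2}x₁^{N/2}`, and consider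
degree-`N` binary forms `φ''` in the linear slice `a_{N/2−1} = a_{N/2+1} = 0`
(the complement of the `sl(2,ℂ)`-orbit directions at `φ`), sufficiently close
to `φ`.  Then `φ''` is polystable for the `SL(2,ℂ)`-action (i.e. has closed
`SL(2,ℂ)`-orbit) iff its orbit under the diagonal torus `diag(λ,λ⁻¹)` is
closed. -/
theorem stmt_18 (N : ℕ) (hN : Even N) (h2 : 2 ≤ N) :
    ∃ U ∈ nhds (evalFn (X 0 ^ (N / 2) * X 1 ^ (N / 2))),
      ∀ f : MvPolynomial (Fin 2) ℂ, f.IsHomogeneous N →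
        coeff (Finsupp.single 0 (N / 2 - 1) + Finsupp.single 1 (N / 2 + 1)) f = 0 →
        coeff (Finsupp.single 0 (N / 2 + 1) + Finsupp.single 1 (N / 2 - 1)) f = 0 →
        evalFn f ∈ U →
        (IsClosed (SLorbit f) ↔ IsClosed (Torbit f)) := by
  obtain ⟨M, hMN⟩ := hN
  obtain rfl : N = 2 * M := by omega
  have hM : 1 ≤ M := by omega
  have hdiv : 2 * M / 2 = M := by omega
  rw [hdiv]
  refine ⟨{F | ∑ i ∈ (Finset.range (2 * M + 1)).erase M, 2 ^ (2 * M) * ‖co (2 * M) F i‖ <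
    ‖co (2 * M) F M‖}, ?_, ?_⟩
  · refine IsOpen.mem_nhds (isOpen_lt ?_ (continuous_co _ _).norm) ?_
    · exact continuous_finsetSum _ fun i _ => continuous_const.mul (continuous_co _ i).norm
    · have hco : ∀ i ≤ 2 * M, co (2 * M) (evalFn (X 0 ^ M * X 1 ^ M)) i =
          if i = M then 1 else 0 := by
        intro i hi
        refine co_eq (a := fun i => if i = M then 1 else 0) (fun x y => ?_) hi
        rw [form_single (M := M) (by omega) (fun i _ h => if_neg h), show 2 * M - M = M by omega]
        simp [evalFn]
      rw [Set.mem_ofPred_eq]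
      rw [hco M (by omega), Finset.sum_eq_zero]
      · simp
      · intro i hi
        obtain ⟨hne, hi⟩ := Finset.mem_erase.1 hi
        rw [hco i (by simpa [Nat.lt_succ_iff] using hi), if_neg hne]
        simp
  · intro f hf h1 h2 hU
    have hform := eval_eq_form hf
    set a : ℕ → ℂ := fun i => coeff (Finsupp.single 0 i + Finsupp.single 1 (2 * M - i)) f with ha
    have hco : ∀ i ≤ 2 * M, co (2 * M) (evalFn f) i = a i := fun i hi =>
      co_eq (fun x y => hform ![x, y]) hi
    rw [SLorbit_eq hform, Torbit_eq hform]
    refine SO_closed_iff hM ?_ ?_ ?_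
    · rw [ha]
      simp only
      rwa [show 2 * M - (M - 1) = M + 1 by omega]
    · rw [ha]
      simp only
      rwa [show 2 * M - (M + 1) = M - 1 by omega]
    · have hU' := hU
      rw [Set.mem_ofPred_eq, hco M (by omega)] at hU'
      refine lt_of_eq_of_lt (Finset.sum_congr rfl fun i hi => ?_) hU'
      have hi' := Finset.mem_range.1 (Finset.mem_of_mem_erase hi)
      rw [hco i (by omega)]

end
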